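/- If d is a bounded metric on X inducing its topology, then the Kantorovich metric d̂ on the space of Radon probability measures on X induces the weak (narrow) topology on that space. -/

import Mathlib

open MeasureTheory
open scoped ENNReal

/-- A measure is tight (Radon) if the complement of some compact set has arbitrarily
small measure. -/
def IsTightM {α : Type*} [TopologicalSpace α] {m : MeasurableSpace α} (μ : Measure α) : Prop :=
  ∀ ε : ℝ≥0∞, 0 < ε → ∃ K : Set α, IsCompact K ∧ μ Kᶜ ≤ ε

/-- `l` is a coupling of `μ` and `η` if its marginals are `μ` and `η`. -/
def IsCoupling {α : Type*} {m : MeasurableSpace α} (l : Measure (α × α)) (μ η : Measure α) :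
    Prop :=
  l.map Prod.fst = μ ∧ l.map Prod.snd = η

/-- The Kantorovich distance between two (tight) probability measures: the infimum of
`∫ dist dλ` over all tight couplings `λ` of `μ` and `η`. -/
noncomputable def kant {α : Type*} [PseudoMetricSpace α] [MeasurableSpace α]
    (μ η : Measure α) : ℝ :=
  sInf {r | ∃ l : Measure (α × α), IsProbabilityMeasure l ∧ IsTightM l ∧
    IsCoupling l μ η ∧ r = ∫ p, dist p.1 p.2 ∂l}

/-!
The integral of a Lipschitz function `f` varies by at most `Lip f * d̂(μ, η)`, and Lipschitz
functions determine weak convergence, so the Kantorovich topology is the finer one.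

Conversely, let `l` be a coupling of `μ₀` and `η₀` of cost less than `ε`. Cut a compact set carrying
most of `η₀` into finitely many small disjoint cells with `η₀`-null boundary. A measure `η` weakly
close to `η₀` gives each cell nearly its `η₀`-mass, so resampling the second coordinate of `l` from
`η` inside its cell, scaling slightly down and completing the lost mass arbitrarily yields a
coupling of `μ₀` and `η`, at a small extra cost because `d` is bounded.

As `X` need not be separable, `d` need not be measurable on `X × X`: tightness makes it almost
everywhere strongly measurable for couplings, and elsewhere `∫⁻` is used as an upper integral.
-/

open Set Filter Topology TopologicalSpace ProbabilityTheory
open scoped NNReal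

namespace IsTightM

variable {α : Type*} [TopologicalSpace α] [PseudoMetrizableSpace α] [MeasurableSpace α]
  {μ : Measure α}

lemma exists_isSeparable_ae_mem (hμ : IsTightM μ) :
    ∃ s, TopologicalSpace.IsSeparable s ∧ ∀ᵐ x ∂μ, x ∈ s := by
  choose K hK hμK using fun n : ℕ ↦ hμ (n : ℝ≥0∞)⁻¹ (ENNReal.inv_pos.2 (ENNReal.natCast_ne_top n))
  refine ⟨⋃ n, K n, .iUnion fun n ↦ (hK n).isSeparable, ?_⟩
  have hle : ∀ n : ℕ, μ (⋃ n, K n)ᶜ ≤ (n : ℝ≥0∞)⁻¹ := fun n ↦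
    (measure_mono (compl_subset_compl.2 (subset_iUnion K n))).trans (hμK n)
  exact nonpos_iff_eq_zero.1 (ge_of_tendsto' ENNReal.tendsto_inv_nat_nhds_zero hle)

lemma aestronglyMeasurable [OpensMeasurableSpace α] {β : Type*} [TopologicalSpace β]
    [PseudoMetrizableSpace β] {f : α → β} (hμ : IsTightM μ) (hf : Continuous f) :
    AEStronglyMeasurable f μ := by
  obtain ⟨s, hs, hμs⟩ := hμ.exists_isSeparable_ae_mem
  rw [← Measure.restrict_eq_self_of_ae_mem (hμs.mono fun _ hx ↦ subset_closure hx)]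
  exact hf.continuousOn.aestronglyMeasurable_of_isSeparable isClosed_closure.measurableSet
    hs.closure

end IsTightM

section Coupling

variable {α : Type*} [MeasurableSpace α] {l l' ρ : Measure (α × α)} {μ μ' η η' : Measure α}

lemma isCoupling_map_diag (μ : Measure α) : IsCoupling (μ.map fun x ↦ (x, x)) μ μ := by
  have hdiag : Measurable fun x : α ↦ (x, x) := measurable_id.prodMk measurable_id
  exact ⟨(Measure.map_map measurable_fst hdiag).trans Measure.map_id,
    (Measure.map_map measurable_snd hdiag).trans Measure.map_id⟩

lemma isCoupling_smul_prod [IsFiniteMeasure μ] [IsFiniteMeasure η] (h : μ univ = η univ) :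
    IsCoupling ((μ univ)⁻¹ • μ.prod η) μ η := by
  have hsmul : ∀ ν : Measure α, ν univ = μ univ → (μ univ)⁻¹ • μ univ • ν = ν := by
    intro ν hν
    rcases eq_or_ne (μ univ) 0 with h0 | h0
    · simp [Measure.measure_univ_eq_zero.1 (hν.trans h0)]
    · rw [smul_smul, ENNReal.inv_mul_cancel h0 (measure_ne_top _ _), one_smul]
  constructor
  · rw [Measure.map_smul, Measure.map_fst_prod, ← h, hsmul μ rfl]
  · rw [Measure.map_smul, Measure.map_snd_prod, hsmul η h.symm]

namespace IsCoupling

lemma fst_eq (h : IsCoupling l μ η) : l.fst = μ := h.1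

lemma snd_eq (h : IsCoupling l μ η) : l.snd = η := h.2

lemma add (h : IsCoupling l μ η) (h' : IsCoupling l' μ' η') :
    IsCoupling (l + l') (μ + μ') (η + η') :=
  ⟨by rw [Measure.map_add _ _ measurable_fst, h.1, h'.1],
    by rw [Measure.map_add _ _ measurable_snd, h.2, h'.2]⟩

lemma measure_univ_eq (h : IsCoupling l μ η) : l univ = μ univ := by
  rw [← h.fst_eq, Measure.fst_univ]

lemma isProbabilityMeasure [IsProbabilityMeasure μ] (h : IsCoupling l μ η) :
    IsProbabilityMeasure l :=
  ⟨h.measure_univ_eq.trans measure_univ⟩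

lemma isTightM [TopologicalSpace α] (h : IsCoupling l μ η) (hμ : IsTightM μ) (hη : IsTightM η) :
    IsTightM l := by
  intro ε hε
  obtain ⟨K, hK, hμK⟩ := hμ (ε / 2) (ENNReal.half_pos hε.ne')
  obtain ⟨L, hL, hηL⟩ := hη (ε / 2) (ENNReal.half_pos hε.ne')
  refine ⟨K ×ˢ L, hK.prod hL, ?_⟩
  calc l (K ×ˢ L)ᶜ = l (Prod.fst ⁻¹' Kᶜ ∪ Prod.snd ⁻¹' Lᶜ) := by
        rw [Set.prod_eq, compl_inter, preimage_compl, preimage_compl]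
    _ ≤ l (Prod.fst ⁻¹' Kᶜ) + l (Prod.snd ⁻¹' Lᶜ) := measure_union_le _ _
    _ ≤ l.fst Kᶜ + l.snd Lᶜ :=
        add_le_add (Measure.le_map_apply measurable_fst.aemeasurable _)
          (Measure.le_map_apply measurable_snd.aemeasurable _)
    _ ≤ ε / 2 + ε / 2 := by rw [h.fst_eq, h.snd_eq]; gcongr
    _ = ε := ENNReal.add_halves ε

end IsCoupling

lemma exists_isCoupling_lintegral_le_of_fst_le_of_snd_le [IsFiniteMeasure μ] [IsFiniteMeasure η]
    (hmass : μ univ = η univ) (hfst : ρ.fst ≤ μ) (hsnd : ρ.snd ≤ η) {c : α × α → ℝ≥0∞} {D : ℝ≥0∞}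
    (hc : ∀ p, c p ≤ D) :
    ∃ l, IsCoupling l μ η ∧ ∫⁻ p, c p ∂l ≤ ∫⁻ p, c p ∂ρ + D * (μ univ - ρ univ) := by
  have : IsFiniteMeasure ρ.fst := isFiniteMeasure_of_le μ hfst
  have : IsFiniteMeasure ρ.snd := isFiniteMeasure_of_le η hsnd
  have hμ_univ : (μ - ρ.fst) univ = μ univ - ρ univ := by
    rw [Measure.sub_apply .univ hfst, Measure.fst_univ]
  have hη_univ : (η - ρ.snd) univ = μ univ - ρ univ := by
    rw [Measure.sub_apply .univ hsnd, Measure.snd_univ, hmass]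
  obtain ⟨l, hl⟩ : ∃ l, IsCoupling l (μ - ρ.fst) (η - ρ.snd) :=
    ⟨_, isCoupling_smul_prod (hμ_univ.trans hη_univ.symm)⟩
  have hρ : IsCoupling ρ ρ.fst ρ.snd := ⟨rfl, rfl⟩
  refine ⟨ρ + l, ?_, ?_⟩
  · simpa only [add_comm ρ.fst, add_comm ρ.snd, Measure.sub_add_cancel_of_le hfst,
      Measure.sub_add_cancel_of_le hsnd] using hρ.add hl
  · rw [lintegral_add_measure]
    gcongr
    calc ∫⁻ p, c p ∂l ≤ ∫⁻ _, D ∂l := lintegral_mono hc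
      _ = D * (μ univ - ρ univ) := by rw [lintegral_const, hl.measure_univ_eq, hμ_univ]

end Coupling

section Resample

variable {ι α β : Type*} [MeasurableSpace α] [MeasurableSpace β] {l : Measure (α × β)}
  {η : Measure β} {A : ι → Set β}

/-- The joint law of the pair obtained from `l` by resampling the second coordinate from `η`,
conditioned on the cell of `A` that contains it. Mass of `l` outside the cells, or in cells that
are null for `η`, is lost. It plays the role of gluing couplings, without requiring `l` to
disintegrate. -/
noncomputable def resampleSnd (l : Measure (α × β)) (η : Measure β) (A : ι → Set β) :
    Measure (α × β) :=
  Measure.sum fun i ↦ (l.restrict (Prod.snd ⁻¹' A i)).fst.prod η[|A i]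

lemma sum_measure_mono {μ ν : ι → Measure α} (h : ∀ i, μ i ≤ ν i) :
    Measure.sum μ ≤ Measure.sum ν := by
  refine Measure.le_iff.2 fun s hs ↦ ?_
  rw [Measure.sum_apply _ hs, Measure.sum_apply _ hs]
  exact ENNReal.tsum_le_tsum fun i ↦ h i s

lemma sum_restrict_le [Countable ι] {ν : Measure β} (hA : ∀ i, MeasurableSet (A i))
    (hd : Pairwise (Function.onFun Disjoint A)) : Measure.sum (fun i ↦ ν.restrict (A i)) ≤ ν :=
  (Measure.restrict_iUnion hd hA).symm.trans_le Measure.restrict_le_self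

lemma fst_resampleSnd_le [Countable ι] (hA : ∀ i, MeasurableSet (A i))
    (hd : Pairwise (Function.onFun Disjoint A)) : (resampleSnd l η A).fst ≤ l.fst := by
  have hcell : ∀ i, ((l.restrict (Prod.snd ⁻¹' A i)).fst.prod η[|A i]).fst ≤
      (l.restrict (Prod.snd ⁻¹' A i)).fst := fun i ↦ by
    rw [Measure.fst, Measure.map_fst_prod]
    intro s
    simpa using mul_le_of_le_one_left' (prob_le_one (μ := η[|A i]) (s := univ))
  calc (resampleSnd l η A).fst
      ≤ Measure.sum fun i ↦ (l.restrict (Prod.snd ⁻¹' A i)).fst := by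
        rw [resampleSnd, Measure.fst_sum]
        exact sum_measure_mono hcell
    _ = (Measure.sum fun i ↦ l.restrict (Prod.snd ⁻¹' A i)).fst := (Measure.fst_sum _).symm
    _ ≤ l.fst := Measure.map_mono (sum_restrict_le (fun i ↦ measurable_snd (hA i))
        fun _ _ hij ↦ (hd hij).preimage _) measurable_fst

lemma snd_resampleSnd (hA : ∀ i, MeasurableSet (A i)) :
    (resampleSnd l η A).snd = Measure.sum fun i ↦ l.snd (A i) • η[|A i] := by
  rw [resampleSnd, Measure.snd_sum]
  congr with i : 1
  rw [Measure.snd, Measure.map_snd_prod, Measure.fst_univ, Measure.restrict_apply_univ,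
    Measure.snd_apply (hA i)]

lemma smul_snd_resampleSnd_le [Countable ι] {t : ℝ≥0∞}
    (hA : ∀ i, MeasurableSet (A i)) (hd : Pairwise (Function.onFun Disjoint A))
    (ht : ∀ i, t * l.snd (A i) ≤ η (A i)) : t • (resampleSnd l η A).snd ≤ η := by
  have hcell : ∀ i s, t * (l.snd (A i) * η[|A i] s) ≤ η.restrict (A i) s := fun i s ↦ by
    rw [ProbabilityTheory.cond, Measure.smul_apply, smul_eq_mul]
    calc t * (l.snd (A i) * ((η (A i))⁻¹ * η.restrict (A i) s))
        = (η (A i))⁻¹ * (t * l.snd (A i)) * η.restrict (A i) s := by ring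
      _ ≤ (η (A i))⁻¹ * η (A i) * η.restrict (A i) s := by gcongr; exact ht i
      _ ≤ η.restrict (A i) s := mul_le_of_le_one_left' (ENNReal.inv_mul_le_one _)
  refine le_trans (Measure.le_iff.2 fun s hs ↦ ?_) (sum_restrict_le hA hd)
  rw [snd_resampleSnd hA, Measure.smul_apply, Measure.sum_apply _ hs, Measure.sum_apply _ hs,
    smul_eq_mul, ← ENNReal.tsum_mul_left]
  exact ENNReal.tsum_le_tsum fun i ↦ hcell i s

lemma mul_resampleSnd_univ [Countable ι] [IsFiniteMeasure η] {t : ℝ≥0∞}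
    (hA : ∀ i, MeasurableSet (A i)) (hd : Pairwise (Function.onFun Disjoint A))
    (ht : ∀ i, t * l.snd (A i) ≤ η (A i)) :
    t * resampleSnd l η A univ = t * l.snd (⋃ i, A i) := by
  have hcell : ∀ i, t * (l.snd (A i) * η[|A i] univ) = t * l.snd (A i) := fun i ↦ by
    rcases eq_or_ne (η (A i)) 0 with h0 | h0
    · rw [← mul_assoc, nonpos_iff_eq_zero.1 ((ht i).trans_eq h0), zero_mul]
    · have := cond_isProbabilityMeasure h0
      rw [measure_univ, mul_one]
  rw [← Measure.snd_univ, snd_resampleSnd hA, Measure.sum_apply _ .univ, measure_iUnion hd hA,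
    ← ENNReal.tsum_mul_left, ← ENNReal.tsum_mul_left]
  exact tsum_congr hcell

end Resample

section Glue

variable {ι X : Type*} [Countable ι] [PseudoEMetricSpace X] [MeasurableSpace X]
  {l : Measure (X × X)} {μ η₀ η : Measure X} {A : ι → Set X} {r : ℝ≥0∞}

lemma lintegral_edist_cond_le {s : Set X} (hs : MeasurableSet s) (hr : Metric.ediam s ≤ r) (x : X)
    {y : X} (hy : y ∈ s) : ∫⁻ z, edist x z ∂η[|s] ≤ edist x y + r := by
  have hle : ∀ᵐ z ∂η[|s], edist x z ≤ edist x y + r := by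
    filter_upwards [ae_cond_mem hs] with z hz
    refine (edist_triangle x y z).trans ?_
    gcongr
    exact (Metric.edist_le_ediam_of_mem hy hz).trans hr
  calc ∫⁻ z, edist x z ∂η[|s] ≤ ∫⁻ _, (edist x y + r) ∂η[|s] := lintegral_mono_ae hle
    _ = (edist x y + r) * η[|s] univ := lintegral_const _
    _ ≤ edist x y + r := mul_le_of_le_one_right' prob_le_one

lemma lintegral_edist_resampleSnd_le (hA : ∀ i, MeasurableSet (A i))
    (hd : Pairwise (Function.onFun Disjoint A)) (hr : ∀ i, Metric.ediam (A i) ≤ r) :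
    ∫⁻ p, edist p.1 p.2 ∂(resampleSnd l η A) ≤ ∫⁻ p, edist p.1 p.2 ∂l + r * l univ := by
  have hS : ∀ i, MeasurableSet (Prod.snd ⁻¹' A i : Set (X × X)) := fun i ↦ measurable_snd (hA i)
  have hcell : ∀ i, ∫⁻ p, edist p.1 p.2 ∂((l.restrict (Prod.snd ⁻¹' A i)).fst.prod η[|A i]) ≤
      ∫⁻ p in Prod.snd ⁻¹' A i, (edist p.1 p.2 + r) ∂l := fun i ↦
    calc _ ≤ ∫⁻ x, ∫⁻ z, edist x z ∂η[|A i] ∂(l.restrict (Prod.snd ⁻¹' A i)).fst :=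
          lintegral_prod_le _
      _ ≤ ∫⁻ p in Prod.snd ⁻¹' A i, ∫⁻ z, edist p.1 z ∂η[|A i] ∂l := lintegral_map_le _ _
      _ ≤ ∫⁻ p in Prod.snd ⁻¹' A i, (edist p.1 p.2 + r) ∂l :=
          setLIntegral_mono' (hS i) fun p hp ↦ lintegral_edist_cond_le (hA i) (hr i) p.1 hp
  calc ∫⁻ p, edist p.1 p.2 ∂(resampleSnd l η A)
      ≤ ∑' i, ∫⁻ p in Prod.snd ⁻¹' A i, (edist p.1 p.2 + r) ∂l := by
        rw [resampleSnd, lintegral_sum_measure]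
        exact ENNReal.tsum_le_tsum hcell
    _ = ∫⁻ p, (edist p.1 p.2 + r) ∂(Measure.sum fun i ↦ l.restrict (Prod.snd ⁻¹' A i)) :=
        (lintegral_sum_measure _ _).symm
    _ ≤ ∫⁻ p, (edist p.1 p.2 + r) ∂l :=
        lintegral_mono' (sum_restrict_le hS fun _ _ hij ↦ (hd hij).preimage _) le_rfl
    _ = ∫⁻ p, edist p.1 p.2 ∂l + r * l univ := by
        rw [lintegral_add_right _ measurable_const, lintegral_const]

lemma IsCoupling.exists_isCoupling_of_mul_le [IsProbabilityMeasure μ] [IsProbabilityMeasure η]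
    (hl : IsCoupling l μ η₀) (hA : ∀ i, MeasurableSet (A i))
    (hd : Pairwise (Function.onFun Disjoint A)) (hr : ∀ i, Metric.ediam (A i) ≤ r) {t : ℝ≥0∞}
    (ht : t ≤ 1) (hη : ∀ i, t * η₀ (A i) ≤ η (A i)) :
    ∃ l', IsCoupling l' μ η ∧ ∫⁻ p, edist p.1 p.2 ∂l' ≤
      ∫⁻ p, edist p.1 p.2 ∂l + r + Metric.ediam (univ : Set X) * (1 - t * η₀ (⋃ i, A i)) := by
  have := hl.isProbabilityMeasure
  set ρ := resampleSnd l η A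
  rw [← hl.snd_eq] at hη ⊢
  have hle : t • ρ ≤ ρ := fun s ↦ mul_le_of_le_one_left' ht
  have hfst : (t • ρ).fst ≤ μ := calc
    (t • ρ).fst ≤ ρ.fst := Measure.map_mono hle measurable_fst
    _ ≤ l.fst := fst_resampleSnd_le hA hd
    _ = μ := hl.fst_eq
  have hsnd : (t • ρ).snd ≤ η := by
    rw [Measure.snd, Measure.map_smul]
    exact smul_snd_resampleSnd_le hA hd hη
  have hcost : ∫⁻ p, edist p.1 p.2 ∂(t • ρ) ≤ ∫⁻ p, edist p.1 p.2 ∂l + r := calc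
    _ ≤ ∫⁻ p, edist p.1 p.2 ∂ρ := lintegral_mono' hle le_rfl
    _ ≤ ∫⁻ p, edist p.1 p.2 ∂l + r * l univ := lintegral_edist_resampleSnd_le hA hd hr
    _ = ∫⁻ p, edist p.1 p.2 ∂l + r := by rw [measure_univ, mul_one]
  obtain ⟨l', hl', hle'⟩ := exists_isCoupling_lintegral_le_of_fst_le_of_snd_le
    (measure_univ.trans measure_univ.symm) hfst hsnd (c := fun p ↦ edist p.1 p.2)
    fun p ↦ Metric.edist_le_ediam_of_mem (mem_univ p.1) (mem_univ p.2)
  refine ⟨l', hl', hle'.trans ?_⟩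
  rw [measure_univ, Measure.smul_apply, smul_eq_mul, mul_resampleSnd_univ hA hd hη]
  gcongr

end Glue

section Partition

lemma measure_frontier_disjointed {ι X : Type*} [Preorder ι] [LocallyFiniteOrderBot ι]
    [TopologicalSpace X] [MeasurableSpace X] {ν : Measure X} {B : ι → Set X}
    (hB : ∀ i, ν (frontier (B i)) = 0) (i : ι) : ν (frontier (disjointed B i)) = 0 := by
  refine disjointedRec (p := fun s ↦ ν (frontier s) = 0) (fun s j hs ↦ ?_) (hB i)
  rw [sdiff_eq]
  refine measure_mono_null (frontier_inter_subset _ _) (measure_union_null ?_ ?_)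
  · exact measure_mono_null inter_subset_left hs
  · exact measure_mono_null inter_subset_right ((frontier_compl (B j)).symm ▸ hB j)

lemma exists_finite_disjoint_cover_null_frontier {X : Type*} [PseudoMetricSpace X]
    [MeasurableSpace X] [OpensMeasurableSpace X] {K : Set X} (hK : IsCompact K) (ν : Measure X)
    [SFinite ν] {r : ℝ≥0} (hr : 0 < r) :
    ∃ (n : ℕ) (A : Fin n → Set X), (∀ i, MeasurableSet (A i)) ∧
      Pairwise (Function.onFun Disjoint A) ∧ (∀ i, ν (frontier (A i)) = 0) ∧
      (∀ i, Metric.ediam (A i) ≤ r) ∧ K ⊆ ⋃ i, A i := by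
  have hball : ∀ x, ∃ s ∈ Ioo 0 (r / 2 : ℝ), ν (frontier (Metric.ball x s)) = 0 := fun x ↦ by
    simpa only [Metric.thickening_singleton] using
      exists_null_frontier_thickening ν {x} (half_pos (NNReal.coe_pos.2 hr))
  choose s hs hνs using hball
  have hsmall : ∀ x, Metric.ediam (Metric.ball x (s x)) ≤ r := fun x ↦ by
    rw [← Metric.eball_ofReal]
    refine Metric.ediam_eball_le.trans ?_
    rw [← ENNReal.ofReal_coe_nnreal, ← ENNReal.ofReal_ofNat 2, ← ENNReal.ofReal_mul zero_le_two]
    exact ENNReal.ofReal_le_ofReal (by linarith [(hs x).2])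
  obtain ⟨T, hKT⟩ := hK.elim_finite_subcover (fun x ↦ Metric.ball x (s x))
    (fun _ ↦ Metric.isOpen_ball) fun x _ ↦ mem_iUnion.2 ⟨x, Metric.mem_ball_self (hs x).1⟩
  let B : Fin T.card → Set X := fun i ↦ Metric.ball (T.equivFin.symm i) (s (T.equivFin.symm i))
  have hmeas : ∀ i, MeasurableSet (disjointed B i) := fun i ↦
    disjointedRec (p := fun t ↦ MeasurableSet t) (fun _ _ ht ↦ ht.diff measurableSet_ball)
      measurableSet_ball
  refine ⟨T.card, disjointed B, hmeas, disjoint_disjointed B,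
    measure_frontier_disjointed fun _ ↦ hνs _,
    fun i ↦ (Metric.ediam_mono (disjointed_subset B i)).trans (hsmall _), ?_⟩
  rw [iUnion_disjointed]
  intro x hx
  obtain ⟨y, hy, hxy⟩ := mem_iUnion₂.1 (hKT hx)
  exact mem_iUnion.2 ⟨T.equivFin ⟨y, hy⟩, by simpa [B] using hxy⟩

end Partition

section Kantorovich

variable {X : Type*} [PseudoMetricSpace X] [MeasurableSpace X] {μ η : Measure X}

lemma kant_nonneg (μ η : Measure X) : 0 ≤ kant μ η := by
  refine Real.sInf_nonneg ?_
  rintro _ ⟨l, -, -, -, rfl⟩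
  exact integral_nonneg fun _ ↦ dist_nonneg

lemma kant_le_integral_dist [IsProbabilityMeasure μ] {l : Measure (X × X)} (hμ : IsTightM μ)
    (hη : IsTightM η) (hl : IsCoupling l μ η) : kant μ η ≤ ∫ p, dist p.1 p.2 ∂l := by
  refine csInf_le ⟨0, ?_⟩ ⟨l, hl.isProbabilityMeasure, hl.isTightM hμ hη, hl, rfl⟩
  rintro _ ⟨l, -, -, -, rfl⟩
  exact integral_nonneg fun _ ↦ dist_nonneg

lemma nonempty_setOf_integral_dist [IsProbabilityMeasure μ] [IsProbabilityMeasure η]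
    (hμ : IsTightM μ) (hη : IsTightM η) :
    {r | ∃ l : Measure (X × X), IsProbabilityMeasure l ∧ IsTightM l ∧
      IsCoupling l μ η ∧ r = ∫ p, dist p.1 p.2 ∂l}.Nonempty := by
  have hl := isCoupling_smul_prod (μ := μ) (η := η) (measure_univ.trans measure_univ.symm)
  exact ⟨_, _, hl.isProbabilityMeasure, hl.isTightM hμ hη, hl, rfl⟩

variable [OpensMeasurableSpace X]

namespace IsCoupling

variable {l : Measure (X × X)}

lemma aestronglyMeasurable_dist (hl : IsCoupling l μ η) (hμ : IsTightM μ) (hη : IsTightM η) :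
    AEStronglyMeasurable (fun p ↦ dist p.1 p.2) l := by
  rw [← hl.1] at hμ
  rw [← hl.2] at hη
  exact ((hμ.aestronglyMeasurable continuous_id).comp_measurable measurable_fst).dist
    ((hη.aestronglyMeasurable continuous_id).comp_measurable measurable_snd)

lemma integrable_dist [BoundedSpace X] [IsFiniteMeasure l] (hl : IsCoupling l μ η)
    (hμ : IsTightM μ) (hη : IsTightM η) : Integrable (fun p ↦ dist p.1 p.2) l := by
  refine .of_bound (hl.aestronglyMeasurable_dist hμ hη) (Metric.diam (univ : Set X))
    (.of_forall fun p ↦ ?_)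
  rw [Real.norm_of_nonneg dist_nonneg]
  exact Metric.dist_le_diam_of_mem (.all _) (mem_univ _) (mem_univ _)

lemma ofReal_integral_dist [BoundedSpace X] [IsFiniteMeasure l] (hl : IsCoupling l μ η)
    (hμ : IsTightM μ) (hη : IsTightM η) :
    ENNReal.ofReal (∫ p, dist p.1 p.2 ∂l) = ∫⁻ p, edist p.1 p.2 ∂l := by
  simp only [edist_dist]
  exact ofReal_integral_eq_lintegral_ofReal (hl.integrable_dist hμ hη)
    (.of_forall fun _ ↦ dist_nonneg)

lemma abs_integral_sub_integral_le {f : X → ℝ} {L : ℝ≥0} (hl : IsCoupling l μ η)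
    (hf : LipschitzWith L f) (hfμ : Integrable f μ) (hfη : Integrable f η)
    (hdist : Integrable (fun p ↦ dist p.1 p.2) l) :
    |∫ x, f x ∂μ - ∫ x, f x ∂η| ≤ L * ∫ p, dist p.1 p.2 ∂l := by
  have hfst : MeasurePreserving Prod.fst l μ := ⟨measurable_fst, hl.1⟩
  have hsnd : MeasurePreserving Prod.snd l η := ⟨measurable_snd, hl.2⟩
  have hf₁ : Integrable (fun p ↦ f p.1) l := hfst.integrable_comp_of_integrable hfμ
  have hf₂ : Integrable (fun p ↦ f p.2) l := hsnd.integrable_comp_of_integrable hfη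
  have hμ_eq : ∫ x, f x ∂μ = ∫ p, f p.1 ∂l := by
    rw [← hl.1, integral_map measurable_fst.aemeasurable
      hf.continuous.measurable.aestronglyMeasurable]
  have hη_eq : ∫ x, f x ∂η = ∫ p, f p.2 ∂l := by
    rw [← hl.2, integral_map measurable_snd.aemeasurable
      hf.continuous.measurable.aestronglyMeasurable]
  calc |∫ x, f x ∂μ - ∫ x, f x ∂η| = |∫ p, (f p.1 - f p.2) ∂l| := by
        rw [hμ_eq, hη_eq, integral_sub hf₁ hf₂]
    _ ≤ ∫ p, |f p.1 - f p.2| ∂l := abs_integral_le_integral_abs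
    _ ≤ ∫ p, L * dist p.1 p.2 ∂l :=
        integral_mono (hf₁.sub hf₂).abs (hdist.const_mul _) fun p ↦ hf.dist_le_mul p.1 p.2
    _ = L * ∫ p, dist p.1 p.2 ∂l := integral_const_mul _ _

end IsCoupling

variable [BoundedSpace X] [IsProbabilityMeasure μ]

lemma kant_lt_iff [IsProbabilityMeasure η] (hμ : IsTightM μ) (hη : IsTightM η) {ε : ℝ}
    (hε : 0 < ε) :
    kant μ η < ε ↔ ∃ l, IsCoupling l μ η ∧ ∫⁻ p, edist p.1 p.2 ∂l < ENNReal.ofReal ε := by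
  constructor
  · intro h
    obtain ⟨_, ⟨l, _, -, hl, rfl⟩, hlt⟩ :=
      exists_lt_of_csInf_lt (nonempty_setOf_integral_dist hμ hη) h
    refine ⟨l, hl, ?_⟩
    rwa [← hl.ofReal_integral_dist hμ hη, ENNReal.ofReal_lt_ofReal_iff hε]
  · rintro ⟨l, hl, hlt⟩
    have := hl.isProbabilityMeasure
    rw [← hl.ofReal_integral_dist hμ hη, ENNReal.ofReal_lt_ofReal_iff hε] at hlt
    exact (kant_le_integral_dist hμ hη hl).trans_lt hlt

lemma kant_self (hμ : IsTightM μ) : kant μ μ = 0 := by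
  refine le_antisymm (le_of_forall_pos_lt_add fun ε hε ↦ ?_) (kant_nonneg μ μ)
  rw [zero_add, kant_lt_iff hμ hμ hε]
  refine ⟨_, isCoupling_map_diag μ, (lintegral_map_le _ _).trans_lt ?_⟩
  simpa only [edist_self, lintegral_zero] using ENNReal.ofReal_pos.2 hε

lemma abs_integral_sub_integral_le_mul_kant [IsProbabilityMeasure η] (hμ : IsTightM μ)
    (hη : IsTightM η) {f : X → ℝ} {L : ℝ≥0} (hf : LipschitzWith L f) (hfμ : Integrable f μ)
    (hfη : Integrable f η) : |∫ x, f x ∂μ - ∫ x, f x ∂η| ≤ L * kant μ η := by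
  rw [kant, ← smul_eq_mul, ← Real.sInf_smul_of_nonneg L.coe_nonneg]
  refine le_csInf (nonempty_setOf_integral_dist hμ hη).smul_set ?_
  rintro _ ⟨_, ⟨l, _, -, hl, rfl⟩, rfl⟩
  exact hl.abs_integral_sub_integral_le hf hfμ hfη (hl.integrable_dist hμ hη)

end Kantorovich

section WeakTopology

variable {X : Type*} [PseudoMetricSpace X] [MeasurableSpace X] [OpensMeasurableSpace X]

lemma IsCoupling.eventually_exists_isCoupling_lintegral_edist_le {l : Measure (X × X)}
    {μ : Measure X} [IsProbabilityMeasure μ] {η₀ : ProbabilityMeasure X} (hl : IsCoupling l μ η₀)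
    (hη₀ : IsTightM (η₀ : Measure X)) {δ : ℝ≥0} (hδ : 0 < δ) :
    ∀ᶠ η : ProbabilityMeasure X in 𝓝 η₀, ∃ l', IsCoupling l' μ η ∧ ∫⁻ p, edist p.1 p.2 ∂l' ≤
      ∫⁻ p, edist p.1 p.2 ∂l + δ + Metric.ediam (univ : Set X) * (δ + δ) := by
  obtain ⟨K, hK, hη₀K⟩ := hη₀ δ (ENNReal.coe_pos.2 hδ)
  obtain ⟨n, A, hA, hd, hfr, hdiam, hKA⟩ :=
    exists_finite_disjoint_cover_null_frontier hK (η₀ : Measure X) hδ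
  have hmass : 1 - (1 - δ) * (η₀ : Measure X) (⋃ i, A i) ≤ δ + δ := by
    rw [tsub_le_iff_left]
    calc (1 : ℝ≥0∞) = (η₀ : Measure X) (⋃ i, A i) + (η₀ : Measure X) (⋃ i, A i)ᶜ := by
          rw [measure_add_measure_compl (.iUnion hA), measure_univ]
      _ ≤ (1 - δ + δ) * (η₀ : Measure X) (⋃ i, A i) + δ :=
          add_le_add (le_mul_of_one_le_left' le_tsub_add)
            ((measure_mono (compl_subset_compl.2 hKA)).trans hη₀K)
      _ ≤ (1 - δ) * (η₀ : Measure X) (⋃ i, A i) + (δ + δ) := by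
          rw [add_mul, add_assoc]
          gcongr
          exact mul_le_of_le_one_right' prob_le_one
  have hcells : ∀ᶠ η : ProbabilityMeasure X in 𝓝 η₀,
      ∀ i, (1 - δ) * (η₀ : Measure X) (A i) ≤ (η : Measure X) (A i) := by
    refine eventually_all.2 fun i ↦ ?_
    rcases eq_or_ne ((η₀ : Measure X) (A i)) 0 with h0 | h0
    · simp [h0]
    · have hlt : (1 - δ) * (η₀ : Measure X) (A i) < (η₀ : Measure X) (A i) := by
        simpa only [one_mul] using ENNReal.mul_lt_mul_left h0 (measure_ne_top _ _)
          (ENNReal.sub_lt_self ENNReal.one_ne_top one_ne_zero (ENNReal.coe_pos.2 hδ).ne')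
      have hlim := ProbabilityMeasure.tendsto_measure_of_null_frontier_of_tendsto'
        (tendsto_id (x := 𝓝 η₀)) (hfr i)
      exact (hlim.eventually_const_lt hlt).mono fun _ ↦ le_of_lt
  filter_upwards [hcells] with η hη
  obtain ⟨l', hl', hcost⟩ := hl.exists_isCoupling_of_mul_le hA hd hdiam tsub_le_self hη
  exact ⟨l', hl', hcost.trans (by gcongr)⟩

variable (X) in
/-- The space of Radon probability measures on `X`, written `HP(X)` in the paper, with the
topology induced by weak convergence. -/
abbrev RadonProbabilityMeasure : Type _ :=
  {μ : ProbabilityMeasure X // IsTightM (μ : Measure X)}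

variable [BoundedSpace X]

lemma isOpen_setOf_kant_lt (μ₀ : RadonProbabilityMeasure X) {ε : ℝ} (hε : 0 < ε) :
    IsOpen {η : RadonProbabilityMeasure X | kant (μ₀.1 : Measure X) η.1 < ε} := by
  refine isOpen_iff_mem_nhds.2 fun η₀ h ↦ ?_
  obtain ⟨l, hl, hlt⟩ := (kant_lt_iff μ₀.2 η₀.2 hε).1 h
  have hD : 1 + Metric.ediam (univ : Set X) * 2 ≠ ∞ :=
    ENNReal.add_ne_top.2 ⟨ENNReal.one_ne_top, ENNReal.mul_ne_top
      (Metric.isBounded_iff_ediam_ne_top.1 (.all _)) ENNReal.ofNat_ne_top⟩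
  obtain ⟨δ, hδ, hδlt⟩ := ENNReal.exists_nnreal_pos_mul_lt hD (tsub_pos_of_lt hlt).ne'
  have hnear := hl.eventually_exists_isCoupling_lintegral_edist_le η₀.2 hδ
  filter_upwards [continuous_subtype_val.tendsto η₀ hnear] with η ⟨l', hl', hcost⟩
  refine (kant_lt_iff μ₀.2 η.2 hε).2 ⟨l', hl', hcost.trans_lt ?_⟩
  calc ∫⁻ p, edist p.1 p.2 ∂l + δ + Metric.ediam (univ : Set X) * (δ + δ)
      = ∫⁻ p, edist p.1 p.2 ∂l + δ * (1 + Metric.ediam (univ : Set X) * 2) := by ring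
    _ < ENNReal.ofReal ε := lt_tsub_iff_left.1 hδlt

lemma comap_kant_nhds_zero_le_nhds (μ₀ : RadonProbabilityMeasure X) :
    comap (fun η : RadonProbabilityMeasure X ↦ kant (μ₀.1 : Measure X) η.1) (𝓝 0) ≤ 𝓝 μ₀ := by
  rw [nhds_subtype_eq_comap, ← tendsto_iff_comap, tendsto_iff_forall_lipschitz_integral_tendsto]
  rintro f ⟨C, hC⟩ ⟨L, hf⟩
  have hfint : ∀ μ : ProbabilityMeasure X, Integrable f (μ : Measure X) := fun μ ↦
    (BoundedContinuousFunction.mkOfBound ⟨f, hf.continuous⟩ C hC).integrable (μ : Measure X)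
  have hkant : Tendsto (fun η : RadonProbabilityMeasure X ↦ kant (μ₀.1 : Measure X) η.1)
      (comap (fun η ↦ kant (μ₀.1 : Measure X) η.1) (𝓝 0)) (𝓝 0) := tendsto_comap
  have hlim := hkant.const_mul (L : ℝ)
  rw [mul_zero] at hlim
  refine tendsto_iff_dist_tendsto_zero.2 (squeeze_zero (fun _ ↦ dist_nonneg) (fun η ↦ ?_) hlim)
  rw [dist_comm, Real.dist_eq]
  exact abs_integral_sub_integral_le_mul_kant μ₀.2 η.2 hf (hfint μ₀) (hfint η)

theorem stmt13_general :
    generateFrom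
      {S : Set (RadonProbabilityMeasure X) | ∃ μ₀ : RadonProbabilityMeasure X, ∃ ε : ℝ, 0 < ε ∧
        S = {η | kant (μ₀.1 : Measure X) (η.1 : Measure X) < ε}} =
    (inferInstance : TopologicalSpace (RadonProbabilityMeasure X)) := by
  refine le_antisymm (le_of_nhds_le_nhds fun μ₀ ↦ ?_) (le_generateFrom ?_)
  · refine le_trans ?_ (comap_kant_nhds_zero_le_nhds μ₀)
    refine (Metric.nhds_basis_ball.comap _).ge_iff.2 fun ε hε ↦ ?_
    have hball : {η : RadonProbabilityMeasure X | kant (μ₀.1 : Measure X) η.1 < ε} ⊆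
        (fun η ↦ kant (μ₀.1 : Measure X) η.1) ⁻¹' Metric.ball 0 ε := fun η hη ↦ by
      rwa [mem_preimage, mem_ball_zero_iff, Real.norm_of_nonneg (kant_nonneg _ _)]
    refine mem_of_superset ?_ hball
    rw [nhds_generateFrom]
    exact mem_iInf_of_mem _ (mem_iInf_of_mem
      ⟨(kant_self μ₀.2).trans_lt hε, μ₀, ε, hε, rfl⟩ (mem_principal_self _))
  · rintro _ ⟨μ₀, ε, hε, rfl⟩
    exact isOpen_setOf_kant_lt μ₀ hε

end WeakTopology

/-- If `d` is a bounded compatible metric on `X`, then the Kantorovich metric on the space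
of Radon (tight) probability measures induces the weak topology of that space: the topology
generated by the Kantorovich balls coincides with the subspace topology inherited from the
weak topology on probability measures. -/
theorem stmt13 {X : Type*} [MetricSpace X] [MeasurableSpace X] [BorelSpace X]
    (hbdd : Bornology.IsBounded (Set.univ : Set X)) :
    TopologicalSpace.generateFrom
      {S : Set {μ : ProbabilityMeasure X // IsTightM (μ : Measure X)} |
        ∃ μ₀ : {μ : ProbabilityMeasure X // IsTightM (μ : Measure X)}, ∃ ε : ℝ, 0 < ε ∧
          S = {η | kant (μ₀.1 : Measure X) (η.1 : Measure X) < ε}} =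
    (inferInstance :
      TopologicalSpace {μ : ProbabilityMeasure X // IsTightM (μ : Measure X)}) := by
  have : BoundedSpace X := ⟨hbdd⟩
  exact stmt13_general
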